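/- arXiv:1003.1688 — 2 statements merged into one kernel-verified Lean document; each statement's English description precedes it below -/
import Mathlib

section
/- Let n be a positive integer, let 0 ≤ k ≤ 1, and let λ = (λ_a, 1^{λ_l − 1}) be a hook partition with λ_l ≤ λ_a ≤ k+n. Let B, C be sets such that: n+1 ∈ B ⊆ {2−k, 3−k, …, n+1}; C ⊆ {3−k, 4−k, …, n+1}; C is a proper subset of B; |B| + |C| ≤ |λ| − 1; |B| ≥ λ_a; |C| + 1 ≤ λ_l; and, writing C as a disjoint union of maximal intervals C_1, …, C_m of consecutive integers, min(C_j) − 1 ∈ B∖C for each j. Set ν = δ_n + Σ_{b∈B} e_b + Σ_{c∈C} e_c + (0^{n+1}, 1^{|λ|−|B|−|C|}). Then the number of semistandard Young tableaux of shape S(λ^t,k,n) with lattice reading word and content ν equals the binomial coefficient C(|B|−|C|−1, λ_l−|C|−1), and the number of semistandard Young tableaux of shape S(λ,k,n) with lattice reading word and content ν equals C(|B|−|C|−1, λ_a−|C|−1). -/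
/-!
Both counts are instances of one statement about a hook with arm `a` and leg `l`
(`LRcount_hook`), applied to the hook and to its transpose.

In a lattice tableau the rows `0, …, n - 1` are forced to read `1, 2, …, i + 1`: above row `i` the
content is `δ_i`, so each value `1, …, i + 1` can be appended only once while row `i` is read
(`row_strict`, `stairForm_of_lattice`). By the same argument the first row of the foundation is
strictly increasing with entries at most `n + 1`. A tableau is therefore determined by the set `A`
of entries of that row and the set `W` of the entries below it (`eq_mkT`), and its content is
`δ_n + 1_A + 1_W`.

If this content is `ν(B, C)`, then `C ⊆ A ⊆ B` and `W = (B \ A) ∪ C ∪ {n + 2, …, n + 1 + r}`.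
The column condition at the corner says `min A < min W`, that is, `min B ∈ A`; note that
`min B ∉ C`, because every `c ∈ C` has `c - 1 ∈ B`. Conversely, every such `A` of size `a` gives a
lattice tableau: only an entry `c ∈ A ∩ W = C` of the leg, or an entry exceeding `n + 1`, could
violate the lattice condition; the former is saved by `c - 1 ∈ B`, the latter by `n + 1 ∈ B` and the
leg entries `n + 2, n + 3, …` being consecutive. Choosing `A \ (C ∪ {min B})`
inside `B \ (C ∪ {min B})` gives the binomial coefficient.
-/

/-- The cells of the rotated staircase `Δ_n`, realized as the skew diagram
`(n^n)/δ_{n-1}`, placed in rows `0,…,n-1` and columns `k,…,n+k-1`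
(each row right-justified; the row of length `i+1` is row `i`). -/
def staircaseCells (n k : ℕ) : Set (ℕ × ℕ) :=
  {p | p.1 < n ∧ k + n - 1 - p.1 ≤ p.2 ∧ p.2 < n + k}

/-- The cells of the foundation `λ/δ_{k-1}`, placed in rows `n, n+1, …`;
row `n + i` contains the cells of row `i` of `λ/δ_{k-1}`. -/
def foundationCells (lam : ℕ → ℕ) (k n : ℕ) : Set (ℕ × ℕ) :=
  {p | n ≤ p.1 ∧ k - 1 - (p.1 - n) ≤ p.2 ∧ p.2 < lam (p.1 - n)}

/-- The staircase with bad foundation `𝒮(λ,k,n)`: the foundation `λ/δ_{k-1}`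
is placed immediately below `Δ_n`, extending `k` columns to its left, so that
rows overlap in exactly `λ₁ - k` columns. -/
def SBF (lam : ℕ → ℕ) (k n : ℕ) : Set (ℕ × ℕ) :=
  staircaseCells n k ∪ foundationCells lam k n

/-- `T` is a semistandard Young tableau of shape `D`: positive entries on `D`,
zero outside `D`, rows weakly increasing, columns strictly increasing. -/
def IsSSYT (D : Set (ℕ × ℕ)) (T : ℕ × ℕ → ℕ) : Prop :=
  (∀ p ∈ D, 0 < T p) ∧ (∀ p, p ∉ D → T p = 0) ∧
  (∀ i j1 j2, j1 ≤ j2 → (i, j1) ∈ D → (i, j2) ∈ D → T (i, j1) ≤ T (i, j2)) ∧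
  (∀ i1 i2 j, i1 < i2 → (i1, j) ∈ D → (i2, j) ∈ D → T (i1, j) < T (i2, j))

/-- The set of cells of `D` read up to (and including) cell `q`, when rows are
read right to left, from the top row to the bottom row. -/
def readUpTo (D : Set (ℕ × ℕ)) (q : ℕ × ℕ) : Set (ℕ × ℕ) :=
  {p ∈ D | p.1 < q.1 ∨ (p.1 = q.1 ∧ q.2 ≤ p.2)}

/-- The reading word of `T` is lattice: at every point while reading, for each
`v ≥ 1` the number of `v+1`'s read so far never exceeds the number of `v`'s. -/
def IsLattice (D : Set (ℕ × ℕ)) (T : ℕ × ℕ → ℕ) : Prop :=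
  ∀ q ∈ D, ∀ v, 1 ≤ v →
    ({p ∈ readUpTo D q | T p = v + 1}).ncard ≤ ({p ∈ readUpTo D q | T p = v}).ncard

/-- The number of entries of `T` (on the shape `D`) equal to `v`. -/
noncomputable def contentOf (D : Set (ℕ × ℕ)) (T : ℕ × ℕ → ℕ) (v : ℕ) : ℕ :=
  ({p ∈ D | T p = v}).ncard

/-- The number of SSYT of shape `D` with lattice reading word and content `ν`
(`ν v` = number of entries equal to `v`, for `v ≥ 1`).  By the
Littlewood-Richardson rule this is the coefficient of the Schur function `s_ν`
in the skew Schur function `s_D`. -/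
noncomputable def LRcount (D : Set (ℕ × ℕ)) (nu : ℕ → ℕ) : ℕ :=
  {T : ℕ × ℕ → ℕ | IsSSYT D T ∧ IsLattice D T ∧ ∀ v, 1 ≤ v → contentOf D T v = nu v}.ncard

/-- The number of SSYT of shape `D` with content `α`.  For `α` supported on
`{1,…,m}` this is the coefficient of the monomial `x^α` in the skew Schur
polynomial `s_D(x_1,…,x_m)`; hence `s_{D₁} = s_{D₂}` in `m` variables iff
`SSYTcount D₁ α = SSYTcount D₂ α` for all such `α`. -/
noncomputable def SSYTcount (D : Set (ℕ × ℕ)) (alpha : ℕ → ℕ) : ℕ :=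
  {T : ℕ × ℕ → ℕ | IsSSYT D T ∧ ∀ v, 1 ≤ v → contentOf D T v = alpha v}.ncard

/-- `lam` is a partition, recorded as its weakly decreasing, eventually zero
sequence of row lengths: `lam i` is the length of row `i+1`. -/
def IsPartition (lam : ℕ → ℕ) : Prop :=
  (∀ i j, i ≤ j → lam j ≤ lam i) ∧ ∃ N, ∀ i, N ≤ i → lam i = 0

/-- The hook partition `(a, 1^{l-1})` with arm (first row) of length `a` and
leg (first column) of length `l`. -/
def hookFun (a l : ℕ) : ℕ → ℕ := fun i => if i = 0 then a else if i < l then 1 else 0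

/-- The content `ν(B,C) = δ_n + Σ_{b ∈ B} e_b + Σ_{c ∈ C} e_c +
(0^{n+1}, 1^{L - |B| - |C|})` attached to a pair of sets `B`, `C`, where
`L = |λ|`: the last summand has entry `1` in positions `n+2,…,n+1+(L-|B|-|C|)`
and `0` elsewhere. -/
def nuBC (n L : ℕ) (B C : Finset ℕ) : ℕ → ℕ := fun v =>
  (if 1 ≤ v ∧ v ≤ n then n + 1 - v else 0) + (if v ∈ B then 1 else 0) +
  (if v ∈ C then 1 else 0) +
  (if n + 2 ≤ v ∧ v ≤ n + 1 + (L - B.card - C.card) then 1 else 0)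

/-! ### Counting entries row by row -/

/-- Number of entries equal to `v` in the rows above row `i`. -/
noncomputable def rowsAbove (D : Set (ℕ × ℕ)) (T : ℕ × ℕ → ℕ) (i v : ℕ) : ℕ :=
  ({p ∈ D | p.1 < i ∧ T p = v}).ncard

/-- Number of entries equal to `v` in row `i`, in columns `≥ j`. -/
noncomputable def rowFrom (D : Set (ℕ × ℕ)) (T : ℕ × ℕ → ℕ) (i j v : ℕ) : ℕ :=
  ({p ∈ D | p.1 = i ∧ j ≤ p.2 ∧ T p = v}).ncard

lemma readUpTo_count {D : Set (ℕ × ℕ)} (hD : D.Finite) (T : ℕ × ℕ → ℕ) (q : ℕ × ℕ) (v : ℕ) :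
    ({p ∈ readUpTo D q | T p = v}).ncard = rowsAbove D T q.1 v + rowFrom D T q.1 q.2 v := by
  unfold rowsAbove rowFrom
  rw [← Set.ncard_union_eq _ (hD.subset (Set.sep_subset _ _)) (hD.subset (Set.sep_subset _ _))]
  · congr 1
    ext p
    simp only [readUpTo, Set.mem_ofPred_eq, Set.mem_union]
    tauto
  · rw [Set.disjoint_left]
    rintro p ⟨_, h1, _⟩ ⟨_, h2, _⟩
    omega

lemma rowsAbove_succ {D : Set (ℕ × ℕ)} (hD : D.Finite) (T : ℕ × ℕ → ℕ) (i v : ℕ) :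
    rowsAbove D T (i + 1) v = rowsAbove D T i v + rowFrom D T i 0 v := by
  unfold rowsAbove rowFrom
  rw [← Set.ncard_union_eq _ (hD.subset (Set.sep_subset _ _)) (hD.subset (Set.sep_subset _ _))]
  · congr 1
    ext p
    simp only [Set.mem_ofPred_eq, Set.mem_union, Nat.lt_succ_iff_lt_or_eq, Nat.zero_le, true_and]
    tauto
  · rw [Set.disjoint_left]
    rintro p ⟨_, h1, _⟩ ⟨_, h2, _⟩
    omega

lemma rowsAbove_zero (D : Set (ℕ × ℕ)) (T : ℕ × ℕ → ℕ) (v : ℕ) : rowsAbove D T 0 v = 0 := by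
  simp [rowsAbove]

lemma rowFrom_eq_zero {D : Set (ℕ × ℕ)} {T : ℕ × ℕ → ℕ} {i j v : ℕ}
    (h : ∀ c, j ≤ c → (i, c) ∈ D → T (i, c) ≠ v) : rowFrom D T i j v = 0 := by
  unfold rowFrom
  convert Set.ncard_empty (ℕ × ℕ)
  rw [Set.eq_empty_iff_forall_notMem]
  rintro ⟨i', c⟩ ⟨h1, h2, h3, h4⟩
  dsimp only at h2 h3
  subst h2
  exact h c h3 h1 h4

lemma rowFrom_pos {D : Set (ℕ × ℕ)} (hD : D.Finite) {T : ℕ × ℕ → ℕ} {i j c v : ℕ}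
    (hc : j ≤ c) (hm : (i, c) ∈ D) (hT : T (i, c) = v) : 1 ≤ rowFrom D T i j v := by
  unfold rowFrom
  rw [Nat.one_le_iff_ne_zero]
  exact Set.ncard_ne_zero_of_mem (a := (i, c)) ⟨hm, rfl, hc, hT⟩
    (hD.subset (Set.sep_subset _ _))

lemma rowFrom_two {D : Set (ℕ × ℕ)} (hD : D.Finite) {T : ℕ × ℕ → ℕ} {i j c c' v : ℕ}
    (hc : j ≤ c) (hm : (i, c) ∈ D) (hT : T (i, c) = v)
    (hc' : c < c') (hm' : (i, c') ∈ D) (hT' : T (i, c') = v) : 2 ≤ rowFrom D T i j v := by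
  unfold rowFrom
  have : 1 < ({p ∈ D | p.1 = i ∧ j ≤ p.2 ∧ T p = v}).ncard := by
    rw [Set.one_lt_ncard_iff (hD.subset (Set.sep_subset _ _))]
    refine ⟨(i, c), (i, c'), ⟨hm, rfl, hc, hT⟩, ⟨hm', rfl, by dsimp only; omega, hT'⟩, ?_⟩
    intro h
    simp only [Prod.mk.injEq, true_and] at h
    omega
  exact this

lemma rowFrom_le_one {D : Set (ℕ × ℕ)} (hD : D.Finite) {T : ℕ × ℕ → ℕ} {i j v : ℕ}
    (hs : ∀ c c', c < c' → (i, c) ∈ D → (i, c') ∈ D → T (i, c) < T (i, c')) :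
    rowFrom D T i j v ≤ 1 := by
  unfold rowFrom
  have : Finite ↑{p | p ∈ D ∧ p.1 = i ∧ j ≤ p.2 ∧ T p = v} :=
    hD.subset (Set.sep_subset _ _)
  rw [Set.ncard_le_one_iff_subsingleton]
  rintro ⟨i1, c⟩ ⟨h1, h2, h3, h4⟩ ⟨i2, c'⟩ ⟨h1', h2', h3', h4'⟩
  dsimp only at h2 h2'
  subst h2 h2'
  rcases lt_trichotomy c c' with h | h | h
  · have := hs _ _ h h1 h1'
    omega
  · rw [h]
  · have := hs _ _ h h1' h1
    omega

/-! ### The shape -/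

lemma mem_SBF {a l k n : ℕ} (hk : k ≤ 1) (hl : 1 ≤ l) (i c : ℕ) :
    (i, c) ∈ SBF (hookFun a l) k n ↔
      (i < n ∧ k + n - 1 - i ≤ c ∧ c < n + k) ∨ (i = n ∧ c < a) ∨
        (n < i ∧ i < n + l ∧ c = 0) := by
  simp only [SBF, staircaseCells, foundationCells, hookFun, Set.mem_union, Set.mem_ofPred_eq]
  rcases lt_trichotomy i n with h | h | h
  · omega
  · subst h
    simp
    omega
  · rw [if_neg (by omega : i - n ≠ 0)]
    split_ifs <;> omega

lemma SBF_finite {a l k n : ℕ} (hk : k ≤ 1) (hl : 1 ≤ l) :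
    (SBF (hookFun a l) k n).Finite := by
  apply ((Set.finite_Iio (n + l)).prod (Set.finite_Iio (n + k + a + 1))).subset
  rintro ⟨i, c⟩ h
  rw [mem_SBF hk hl] at h
  simp only [Set.mem_prod, Set.mem_Iio]
  omega

/-- Entries of the first row of the foundation. -/
def armSet (T : ℕ × ℕ → ℕ) (n a : ℕ) : Finset ℕ := (Finset.range a).image fun c => T (n, c)

/-- Entries of the first `m` rows of the foundation below its first row. -/
def legSet (T : ℕ × ℕ → ℕ) (n m : ℕ) : Finset ℕ :=
  (Finset.range m).image fun j => T (n + 1 + j, 0)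

/-- `T` carries `1, 2, …, i + 1` in row `i` of the staircase, for each `i < N`. -/
def StairForm (T : ℕ × ℕ → ℕ) (n k N : ℕ) : Prop :=
  ∀ i c, i < N → k + n - 1 - i ≤ c → c < n + k → T (i, c) = c + i + 2 - n - k

section counts

variable {a l k n : ℕ} {T : ℕ × ℕ → ℕ}

lemma rowsAbove_stair (hk : k ≤ 1) (hl : 1 ≤ l) {N : ℕ} (hN : N ≤ n) (hT : StairForm T n k N)
    {i : ℕ} (hi : i ≤ N) {v : ℕ} (hv : 1 ≤ v) :
    rowsAbove (SBF (hookFun a l) k n) T i v = i + 1 - v := by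
  have hD : (SBF (hookFun a l) k n).Finite := SBF_finite hk hl
  induction i with
  | zero => rw [rowsAbove_zero]; omega
  | succ i ih =>
    rw [rowsAbove_succ hD, ih (by omega)]
    have hle : rowFrom (SBF (hookFun a l) k n) T i 0 v ≤ 1 := by
      apply rowFrom_le_one hD
      intro c c' hcc h h'
      rw [mem_SBF hk hl] at h h'
      rw [hT i c (by omega) (by omega) (by omega), hT i c' (by omega) (by omega) (by omega)]
      omega
    by_cases hvi : v ≤ i + 1
    · have : 1 ≤ rowFrom (SBF (hookFun a l) k n) T i 0 v := by
        apply rowFrom_pos hD (c := v + n + k - 2 - i) (Nat.zero_le _)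
        · rw [mem_SBF hk hl]; omega
        · rw [hT i _ (by omega) (by omega) (by omega)]; omega
      omega
    · have : rowFrom (SBF (hookFun a l) k n) T i 0 v = 0 := by
        apply rowFrom_eq_zero
        intro c _ h
        rw [mem_SBF hk hl] at h
        rw [hT i c (by omega) (by omega) (by omega)]
        omega
      omega

lemma rowsAbove_arm (hk : k ≤ 1) (hl : 1 ≤ l) (hT : StairForm T n k n)
    (hs : ∀ c c', c < c' → c' < a → T (n, c) < T (n, c')) {v : ℕ} (hv : 1 ≤ v) :
    rowsAbove (SBF (hookFun a l) k n) T (n + 1) v =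
      n + 1 - v + if v ∈ armSet T n a then 1 else 0 := by
  have hD : (SBF (hookFun a l) k n).Finite := SBF_finite hk hl
  rw [rowsAbove_succ hD, rowsAbove_stair hk hl le_rfl hT le_rfl hv]
  congr 1
  have hle : rowFrom (SBF (hookFun a l) k n) T n 0 v ≤ 1 := by
    apply rowFrom_le_one hD
    intro c c' hcc h h'
    rw [mem_SBF hk hl] at h h'
    exact hs c c' hcc (by omega)
  split_ifs with h
  · simp only [armSet, Finset.mem_image, Finset.mem_range] at h
    obtain ⟨c, hc, h⟩ := h
    have := rowFrom_pos hD (T := T) (i := n) (Nat.zero_le c)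
      ((mem_SBF (a := a) (l := l) hk hl n c).2 (by omega)) h
    omega
  · apply rowFrom_eq_zero
    intro c _ hc hTc
    rw [mem_SBF hk hl] at hc
    apply h
    simp only [armSet, Finset.mem_image, Finset.mem_range]
    exact ⟨c, by omega, hTc⟩

lemma rowFrom_leg (hk : k ≤ 1) (hl : 1 ≤ l) {m : ℕ} (hm : n + 1 + m < n + l) (v : ℕ) :
    rowFrom (SBF (hookFun a l) k n) T (n + 1 + m) 0 v =
      if T (n + 1 + m, 0) = v then 1 else 0 := by
  have hD : (SBF (hookFun a l) k n).Finite := SBF_finite hk hl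
  have hle : rowFrom (SBF (hookFun a l) k n) T (n + 1 + m) 0 v ≤ 1 := by
    apply rowFrom_le_one hD
    intro c c' hcc h h'
    rw [mem_SBF hk hl] at h h'
    omega
  split_ifs with h
  · have := rowFrom_pos hD (T := T) (i := n + 1 + m) (Nat.zero_le 0)
      ((mem_SBF (a := a) (l := l) hk hl _ 0).2 (by omega)) h
    omega
  · apply rowFrom_eq_zero
    intro c _ hc hTc
    rw [mem_SBF hk hl] at hc
    have : c = 0 := by omega
    subst this
    exact h hTc

lemma rowsAbove_leg (hk : k ≤ 1) (hl : 1 ≤ l) (hT : StairForm T n k n)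
    (hs : ∀ c c', c < c' → c' < a → T (n, c) < T (n, c'))
    (hg : ∀ j j', j < j' → j' < l - 1 → T (n + 1 + j, 0) < T (n + 1 + j', 0))
    {v : ℕ} (hv : 1 ≤ v) {m : ℕ} (hm : m ≤ l - 1) :
    rowsAbove (SBF (hookFun a l) k n) T (n + 1 + m) v =
      n + 1 - v + (if v ∈ armSet T n a then 1 else 0) + if v ∈ legSet T n m then 1 else 0 := by
  have hD : (SBF (hookFun a l) k n).Finite := SBF_finite hk hl
  induction m with
  | zero => rw [Nat.add_zero, rowsAbove_arm hk hl hT hs hv]; simp [legSet]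
  | succ m ih =>
    rw [← Nat.add_assoc, rowsAbove_succ hD, ih (by omega), rowFrom_leg hk hl (by omega), add_assoc]
    congr 1
    have hnew : T (n + 1 + m, 0) ∉ legSet T n m := by
      simp only [legSet, Finset.mem_image, Finset.mem_range, not_exists, not_and]
      intro j hj
      exact (hg j m hj (by omega)).ne
    have hins : legSet T n (m + 1) = insert (T (n + 1 + m, 0)) (legSet T n m) := by
      simp [legSet, Finset.range_add_one]
    rw [hins]
    by_cases h : T (n + 1 + m, 0) = v
    · subst h
      simp [hnew]
    · simp [h, Ne.symm h]

lemma contentOf_SBF (hk : k ≤ 1) (hl : 1 ≤ l) (hT : StairForm T n k n)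
    (hs : ∀ c c', c < c' → c' < a → T (n, c) < T (n, c'))
    (hg : ∀ j j', j < j' → j' < l - 1 → T (n + 1 + j, 0) < T (n + 1 + j', 0))
    {v : ℕ} (hv : 1 ≤ v) :
    contentOf (SBF (hookFun a l) k n) T v =
      n + 1 - v + (if v ∈ armSet T n a then 1 else 0) +
        if v ∈ legSet T n (l - 1) then 1 else 0 := by
  rw [← rowsAbove_leg hk hl hT hs hg hv le_rfl]
  unfold contentOf rowsAbove
  congr 1
  ext ⟨i, c⟩
  simp only [Set.mem_ofPred_eq]
  constructor
  · rintro ⟨h1, h2⟩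
    refine ⟨h1, ?_, h2⟩
    rw [mem_SBF hk hl] at h1
    omega
  · rintro ⟨h1, _, h2⟩
    exact ⟨h1, h2⟩

/-! ### Lattice tableaux are forced on the staircase -/

/-- Above row `i ≤ n` the content is `δ_i`, so each of `1, …, i + 1` can be appended once and,
since the column condition keeps `1` out of all but the first cell, row `i` is strict. -/
lemma row_strict (hk : k ≤ 1) (hl : 1 ≤ l) (ha : a ≤ n + k)
    (hS : IsSSYT (SBF (hookFun a l) k n) T) (hL : IsLattice (SBF (hookFun a l) k n) T)
    {i : ℕ} (hi : i ≤ n) (hT : StairForm T n k i) :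
    (∀ c, (i, c) ∈ SBF (hookFun a l) k n → T (i, c) ≤ i + 1) ∧
    ∀ c c', c < c' → (i, c) ∈ SBF (hookFun a l) k n → (i, c') ∈ SBF (hookFun a l) k n →
      T (i, c) < T (i, c') := by
  have hD : (SBF (hookFun a l) k n).Finite := SBF_finite hk hl
  obtain ⟨hpos, -, hrow, hcol⟩ := hS
  have hlast : ∃ e, (∀ c, (i, c) ∈ SBF (hookFun a l) k n → c ≤ e) ∧
      ((∃ c, (i, c) ∈ SBF (hookFun a l) k n) → (i, e) ∈ SBF (hookFun a l) k n) := by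
    simp only [mem_SBF hk hl]
    by_cases h : i < n
    · exact ⟨n + k - 1, fun c hc => by omega, fun hc => by omega⟩
    · exact ⟨a - 1, fun c hc => by omega, fun ⟨c, hc⟩ => by omega⟩
  constructor
  · intro c hc
    obtain ⟨e, he, hem⟩ := hlast
    have hem := hem ⟨c, hc⟩
    refine (hrow i c e (he c hc) hc hem).trans ?_
    by_contra! hlt
    have hlat := hL (i, e) hem (T (i, e) - 1) (by omega)
    rw [readUpTo_count hD, readUpTo_count hD, Nat.sub_add_cancel (by omega)] at hlat
    dsimp only at hlat
    have h1 := rowFrom_pos hD (le_refl e) hem (rfl : T (i, e) = _)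
    have h2 : rowFrom (SBF (hookFun a l) k n) T i e (T (i, e) - 1) = 0 := by
      apply rowFrom_eq_zero
      intro c' hc' hm'
      have := hrow i e c' hc' hem hm'
      omega
    rw [rowsAbove_stair hk hl hi hT le_rfl (by omega),
      rowsAbove_stair hk hl hi hT le_rfl (by omega)] at hlat
    omega
  · intro c c' hcc hc hc'
    refine lt_of_le_of_ne (hrow i c c' hcc.le hc hc') fun heq => ?_
    -- the cell above `(i, c')` belongs to the staircase
    have hge : 2 ≤ T (i, c') := by
      have hi0 : i ≠ 0 := by
        rintro rfl
        rw [mem_SBF hk hl] at hc hc'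
        omega
      have hup : (i - 1, c') ∈ SBF (hookFun a l) k n := by
        rw [mem_SBF hk hl] at hc hc' ⊢
        omega
      have h1 := hpos _ hup
      have h2 := hcol (i - 1) i c' (by omega) hup hc'
      omega
    have hlat := hL (i, c) hc (T (i, c) - 1) (by omega)
    rw [readUpTo_count hD, readUpTo_count hD, Nat.sub_add_cancel (by omega)] at hlat
    dsimp only at hlat
    have h1 := rowFrom_two hD (le_refl c) hc rfl hcc hc' heq.symm
    have h2 : rowFrom (SBF (hookFun a l) k n) T i c (T (i, c) - 1) = 0 := by
      apply rowFrom_eq_zero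
      intro c'' hc'' hm''
      have := hrow i c c'' hc'' hc hm''
      omega
    rw [rowsAbove_stair hk hl hi hT le_rfl (by omega),
      rowsAbove_stair hk hl hi hT le_rfl (by omega)] at hlat
    omega

lemma stairForm_of_lattice (hk : k ≤ 1) (hl : 1 ≤ l) (ha : a ≤ n + k)
    (hS : IsSSYT (SBF (hookFun a l) k n) T) (hL : IsLattice (SBF (hookFun a l) k n) T) :
    ∀ i, i ≤ n → StairForm T n k i := by
  intro i
  induction i with
  | zero => intro _ i c h; omega
  | succ i ih =>
    intro hi
    have hT := ih (by omega)
    obtain ⟨hle, hst⟩ := row_strict hk hl ha hS hL (by omega) hT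
    intro i' c hi' h1 h2
    rcases Nat.lt_succ_iff_lt_or_eq.1 hi' with h | rfl
    · exact hT i' c h h1 h2
    have hmem : ∀ j, j ≤ i' → (i', k + n - 1 - i' + j) ∈ SBF (hookFun a l) k n := by
      intro j hj
      rw [mem_SBF hk hl]
      omega
    have hlow : ∀ j, j ≤ i' → j + 1 ≤ T (i', k + n - 1 - i' + j) := by
      intro j
      induction j with
      | zero => intro hj; exact hS.1 _ (hmem 0 hj)
      | succ j ihj =>
        intro hj
        have := ihj (by omega)
        have := hst _ _ (by omega) (hmem j (by omega)) (hmem (j + 1) hj)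
        omega
    have hup : ∀ j, j ≤ i' → T (i', k + n - 1 - i' + (i' - j)) ≤ i' + 1 - j := by
      intro j
      induction j with
      | zero => intro hj; exact hle _ (hmem _ (by omega))
      | succ j ihj =>
        intro hj
        have := ihj (by omega)
        have := hst (k + n - 1 - i' + (i' - (j + 1))) (k + n - 1 - i' + (i' - j)) (by omega)
          (hmem _ (by omega)) (hmem _ (by omega))
        omega
    obtain ⟨j, rfl⟩ := Nat.exists_eq_add_of_le h1
    have h3 := hlow j (by omega)
    have h4 := hup (i' - j) (by omega)
    rw [show i' - (i' - j) = j by omega] at h4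
    omega

end counts

/-! ### Strictly increasing sequences and their sets of values -/

/-- A strictly increasing finite sequence is the increasing enumeration of its set of values. -/
lemma eq_nth_of_strict {f : ℕ → ℕ} {m : ℕ} (hf : ∀ c c', c < c' → c' < m → f c < f c')
    {c : ℕ} (hc : c < m) : f c = Nat.nth (· ∈ (Finset.range m).image f) c := by
  have hmem : f c ∈ (Finset.range m).image f :=
    Finset.mem_image_of_mem _ (Finset.mem_range.2 hc)
  have hcount : Nat.count (· ∈ (Finset.range m).image f) (f c) = c := by
    rw [Nat.count_eq_card_filter_range]
    have : (Finset.range (f c)).filter (· ∈ (Finset.range m).image f) =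
        (Finset.range c).image f := by
      ext x
      simp only [Finset.mem_filter, Finset.mem_range, Finset.mem_image]
      constructor
      · rintro ⟨hx, d, hd, rfl⟩
        refine ⟨d, ?_, rfl⟩
        by_contra! hcd
        rcases hcd.lt_or_eq with h | h
        · have := hf _ _ h hd
          omega
        · subst h; omega
      · rintro ⟨d, hd, rfl⟩
        exact ⟨hf _ _ hd hc, d, by omega, rfl⟩
    rw [this, Finset.card_image_of_injOn, Finset.card_range]
    intro x hx y hy hxy
    simp only [Finset.coe_range, Set.mem_Iio] at hx hy
    rcases lt_trichotomy x y with h | h | h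
    · have := hf _ _ h (by omega); omega
    · exact h
    · have := hf _ _ h (by omega); omega
  have := Nat.nth_count (p := (· ∈ (Finset.range m).image f)) hmem
  rw [hcount] at this
  exact this.symm

lemma nth_strict (A : Finset ℕ) (c c' : ℕ) (h : c < c') (h' : c' < A.card) :
    Nat.nth (· ∈ A) c < Nat.nth (· ∈ A) c' := by
  have hf : {x | x ∈ A}.Finite := A.finite_toSet
  have hc : hf.toFinset = A := by ext; simp
  exact Nat.nth_lt_nth_of_lt_card hf h (by rw [hc]; exact h')

lemma image_nth (A : Finset ℕ) : (Finset.range A.card).image (Nat.nth (· ∈ A)) = A := by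
  have hf : {x | x ∈ A}.Finite := A.finite_toSet
  have hc : hf.toFinset = A := by ext; simp
  have := Nat.image_nth_Iio_card hf
  rw [hc] at this
  ext x
  have hx := Set.ext_iff.1 this x
  simpa using hx

lemma nth_mem_finset (A : Finset ℕ) {c : ℕ} (h : c < A.card) : Nat.nth (· ∈ A) c ∈ A := by
  have := Finset.mem_image_of_mem (Nat.nth (· ∈ A)) (Finset.mem_range.2 h)
  rwa [image_nth] at this

lemma exists_nth_eq (A : Finset ℕ) {x : ℕ} (h : x ∈ A) :
    ∃ c, c < A.card ∧ Nat.nth (· ∈ A) c = x := by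
  rw [← image_nth A] at h
  simpa using h

/-! ### Reconstructing a tableau from its arm and its leg -/

/-- The filling with rows `1, …, i + 1` on the staircase, the elements of `A` along the first row
of the foundation and those of `W` down its first column below that row, in increasing order. -/
noncomputable def mkT (n k a l : ℕ) (A W : Finset ℕ) : ℕ × ℕ → ℕ := fun p =>
  if p.1 < n then (if k + n - 1 - p.1 ≤ p.2 ∧ p.2 < n + k then p.2 + p.1 + 2 - n - k else 0)
  else if p.1 = n then (if p.2 < a then Nat.nth (· ∈ A) p.2 else 0)
  else if p.1 < n + l ∧ p.2 = 0 then Nat.nth (· ∈ W) (p.1 - n - 1) else 0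

section reconstruct

variable {a l k n : ℕ}

lemma mkT_stair (A W : Finset ℕ) : StairForm (mkT n k a l A W) n k n := by
  intro i c hi h1 h2
  simp only [mkT]
  rw [if_pos hi, if_pos ⟨h1, h2⟩]

lemma mkT_arm (A W : Finset ℕ) {c : ℕ} (hc : c < a) :
    mkT n k a l A W (n, c) = Nat.nth (· ∈ A) c := by
  simp [mkT, hc]

lemma mkT_leg (A W : Finset ℕ) {j : ℕ} (hj : j < l - 1) :
    mkT n k a l A W (n + 1 + j, 0) = Nat.nth (· ∈ W) j := by
  simp only [mkT]
  rw [if_neg (by omega), if_neg (by omega), if_pos ⟨by omega, trivial⟩,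
    show n + 1 + j - n - 1 = j by omega]

lemma armSet_mkT (A W : Finset ℕ) (hA : A.card = a) : armSet (mkT n k a l A W) n a = A := by
  conv_rhs => rw [← image_nth A, hA]
  unfold armSet
  apply Finset.image_congr
  intro c hc
  exact mkT_arm A W (by simpa using hc)

lemma legSet_mkT (A W : Finset ℕ) (hW : W.card = l - 1) :
    legSet (mkT n k a l A W) n (l - 1) = W := by
  conv_rhs => rw [← image_nth W, hW]
  unfold legSet
  apply Finset.image_congr
  intro c hc
  exact mkT_leg A W (by simpa using hc)

lemma eq_mkT (hk : k ≤ 1) (hl : 1 ≤ l) (ha : a ≤ n + k) {T : ℕ × ℕ → ℕ}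
    (hS : IsSSYT (SBF (hookFun a l) k n) T) (hL : IsLattice (SBF (hookFun a l) k n) T) :
    T = mkT n k a l (armSet T n a) (legSet T n (l - 1)) := by
  have hst := stairForm_of_lattice hk hl ha hS hL n le_rfl
  obtain ⟨-, hrow⟩ := row_strict hk hl ha hS hL le_rfl hst
  funext ⟨i, c⟩
  by_cases hm : (i, c) ∈ SBF (hookFun a l) k n
  · rcases (mem_SBF hk hl i c).1 hm with ⟨h1, h2, h3⟩ | ⟨rfl, h2⟩ | ⟨h1, h2, rfl⟩
    · rw [hst i c h1 h2 h3, mkT_stair _ _ i c h1 h2 h3]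
    · rw [mkT_arm _ _ h2]
      refine eq_nth_of_strict (f := fun c => T (i, c)) ?_ h2
      intro c c' hc hc'
      exact hrow c c' hc ((mem_SBF hk hl _ _).2 (by omega)) ((mem_SBF hk hl _ _).2 (by omega))
    · obtain ⟨j, rfl⟩ := Nat.exists_eq_add_of_lt h1
      rw [show n + j + 1 = n + 1 + j by omega, mkT_leg _ _ (by omega)]
      refine eq_nth_of_strict (f := fun j => T (n + 1 + j, 0)) ?_ (by omega)
      intro c c' hc hc'
      exact hS.2.2.2 _ _ _ (by omega) ((mem_SBF hk hl _ _).2 (by omega))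
        ((mem_SBF hk hl _ _).2 (by omega))
  · rw [hS.2.1 _ hm]
    rw [mem_SBF hk hl] at hm
    simp only [mkT]
    split_ifs <;> omega

end reconstruct

/-! ### Which arms and legs occur -/

/-- The leg complementary to the arm `A`: together they have multiset of entries
`B + C + {n + 2, …, n + 1 + r}`. -/
def complLeg (n r : ℕ) (B C A : Finset ℕ) : Finset ℕ := (B \ A) ∪ C ∪ Finset.Icc (n + 2) (n + 1 + r)

lemma card_complLeg {n r : ℕ} {B C A : Finset ℕ} (hB : ∀ b ∈ B, b ≤ n + 1) (hCA : C ⊆ A)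
    (hAB : A ⊆ B) : (complLeg n r B C A).card + A.card = B.card + C.card + r := by
  unfold complLeg
  have h1 : Disjoint (B \ A) C := by
    rw [Finset.disjoint_left]
    intro x hx hxC
    exact (Finset.mem_sdiff.1 hx).2 (hCA hxC)
  have h2 : Disjoint (B \ A ∪ C) (Finset.Icc (n + 2) (n + 1 + r)) := by
    rw [Finset.disjoint_left]
    intro x hx hxI
    have hxB : x ∈ B := by
      rcases Finset.mem_union.1 hx with h | h
      · exact (Finset.mem_sdiff.1 h).1
      · exact hAB (hCA h)
    have := hB x hxB
    have := (Finset.mem_Icc.1 hxI).1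
    omega
  rw [Finset.card_union_of_disjoint h2, Finset.card_union_of_disjoint h1, Nat.card_Icc]
  have := Finset.card_sdiff_add_card_eq_card hAB
  omega

/-- The equation between contents, at a single value: `pA`, `pW`, `pB`, `pC`, `pI` say that the
value lies in the arm, in the leg, in `B`, in `C`, in `{n + 2, …, n + 1 + r}`. -/
lemma indicator_sum_iff {pA pW pB pC pI : Prop} [Decidable pA] [Decidable pW] [Decidable pB]
    [Decidable pC] [Decidable pI] (hAB : pA → pB) (hCA : pC → pA) (hI : pB → ¬ pI) :
    ((if pA then 1 else 0) + (if pW then 1 else 0) =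
      (if pB then 1 else 0) + (if pC then 1 else 0) + (if pI then 1 else 0)) ↔
    (pW ↔ (pB ∧ ¬ pA) ∨ pC ∨ pI) := by
  by_cases h1 : pA <;> by_cases h2 : pW <;> by_cases h3 : pB <;> by_cases h4 : pC <;>
    by_cases h5 : pI <;> simp_all

set_option maxHeartbeats 1000000 in
/-- The count for a single hook with arm `a` and leg `l`: the map sending a tableau to the set of
entries in the first row of its foundation is a bijection onto the sets `A` of size `a` with
`C ∪ {min B} ⊆ A ⊆ B`. -/
lemma LRcount_hook (n k a l : ℕ) (hn : 1 ≤ n) (hk : k ≤ 1) (hl : 1 ≤ l)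
    (ha : a ≤ n + k) (B C : Finset ℕ)
    (hB : ∀ b ∈ B, 2 - k ≤ b ∧ b ≤ n + 1) (hBn : n + 1 ∈ B)
    (hC : ∀ c ∈ C, 3 - k ≤ c) (hCB : C ⊆ B)
    (hcard : B.card + C.card + 2 ≤ a + l) (hCa : C.card + 1 ≤ a)
    (hmin : ∀ c ∈ C, c - 1 ∈ B) :
    LRcount (SBF (hookFun a l) k n) (nuBC n (a + l - 1) B C) =
      (B.card - C.card - 1).choose (a - C.card - 1) := by
  have hD : (SBF (hookFun a l) k n).Finite := SBF_finite hk hl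
  obtain ⟨b, hbB, hbmin⟩ : ∃ b ∈ B, ∀ x ∈ B, b ≤ x :=
    ⟨B.min' ⟨_, hBn⟩, B.min'_mem _, fun x hx => B.min'_le x hx⟩
  have hbC : b ∉ C := by
    intro h
    have h1 := hbmin _ (hmin b h)
    have h2 := hC b h
    omega
  set r := a + l - 1 - B.card - C.card with hr
  -- the possible arms
  let G : Finset (Finset ℕ) := B.powerset.filter fun A => C ⊆ A ∧ b ∈ A ∧ A.card = a
  have hG : ∀ A, A ∈ G ↔ A ⊆ B ∧ C ⊆ A ∧ b ∈ A ∧ A.card = a := by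
    intro A
    simp [G]
  have hGcard : G.card = (B.card - C.card - 1).choose (a - C.card - 1) := by
    have h1 : ((B \ C).erase b).card = B.card - C.card - 1 := by
      rw [Finset.card_erase_of_mem (Finset.mem_sdiff.2 ⟨hbB, hbC⟩), Finset.card_sdiff_of_subset hCB]
    rw [← h1, ← Finset.card_powersetCard]
    refine Finset.card_bij' (fun A _ => (A \ C).erase b) (fun E _ => insert b (C ∪ E)) ?_ ?_ ?_ ?_
    · intro A hA
      obtain ⟨hAB, hCA, hbA, hcA⟩ := (hG A).1 hA
      rw [Finset.mem_powersetCard]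
      refine ⟨Finset.erase_subset_erase _ (Finset.sdiff_subset_sdiff hAB le_rfl), ?_⟩
      rw [Finset.card_erase_of_mem (Finset.mem_sdiff.2 ⟨hbA, hbC⟩), Finset.card_sdiff_of_subset hCA,
        hcA]
    · intro E hE
      obtain ⟨hE1, hE2⟩ := Finset.mem_powersetCard.1 hE
      have hbE : b ∉ C ∪ E := by
        rw [Finset.mem_union]
        rintro (h | h)
        · exact hbC h
        · simpa using hE1 h
      have hdis : Disjoint C E := by
        rw [Finset.disjoint_left]
        intro x hx hxE
        have := hE1 hxE
        simp only [Finset.mem_erase, Finset.mem_sdiff] at this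
        exact this.2.2 hx
      rw [hG]
      refine ⟨?_, ?_, Finset.mem_insert_self _ _, ?_⟩
      · intro x hx
        rw [Finset.mem_insert, Finset.mem_union] at hx
        rcases hx with rfl | hx | hx
        · exact hbB
        · exact hCB hx
        · exact (Finset.mem_sdiff.1 (Finset.mem_of_mem_erase (hE1 hx))).1
      · exact Finset.subset_union_left.trans (Finset.subset_insert _ _)
      · rw [Finset.card_insert_of_notMem hbE, Finset.card_union_of_disjoint hdis, hE2]
        omega
    · intro A hA
      obtain ⟨hAB, hCA, hbA, hcA⟩ := (hG A).1 hA
      ext x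
      have hx := @hCA x
      simp only [Finset.mem_insert, Finset.mem_union, Finset.mem_erase, Finset.mem_sdiff]
      by_cases hxb : x = b
      · subst hxb; tauto
      · tauto
    · intro E hE
      obtain ⟨hE1, hE2⟩ := Finset.mem_powersetCard.1 hE
      ext x
      have hx := @hE1 x
      simp only [Finset.mem_insert, Finset.mem_union, Finset.mem_erase, Finset.mem_sdiff] at hx ⊢
      tauto
  rw [← hGcard, ← Set.ncard_coe_finset]
  unfold LRcount
  have hnu : ∀ v, 1 ≤ v → nuBC n (a + l - 1) B C v = n + 1 - v + (if v ∈ B then 1 else 0) +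
      (if v ∈ C then 1 else 0) + (if n + 2 ≤ v ∧ v ≤ n + 1 + r then 1 else 0) := by
    intro v hv
    simp only [nuBC, ← hr]
    congr 3
    split_ifs <;> omega
  -- arm and leg of a lattice tableau of content `ν`
  have forward : ∀ T, IsSSYT (SBF (hookFun a l) k n) T → IsLattice (SBF (hookFun a l) k n) T →
      (∀ v, 1 ≤ v → contentOf (SBF (hookFun a l) k n) T v = nuBC n (a + l - 1) B C v) →
      armSet T n a ∈ G ∧ legSet T n (l - 1) = complLeg n r B C (armSet T n a) := by
    intro T hS hL hcont
    have hst := stairForm_of_lattice hk hl ha hS hL n le_rfl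
    obtain ⟨hle, hrow⟩ := row_strict hk hl ha hS hL le_rfl hst
    have hrow' : ∀ c c', c < c' → c' < a → T (n, c) < T (n, c') := fun c c' hc hc' =>
      hrow c c' hc ((mem_SBF hk hl _ _).2 (by omega)) ((mem_SBF hk hl _ _).2 (by omega))
    have hleg : ∀ j j', j < j' → j' < l - 1 → T (n + 1 + j, 0) < T (n + 1 + j', 0) :=
      fun j j' hj hj' => hS.2.2.2 _ _ _ (by omega) ((mem_SBF hk hl _ _).2 (by omega))
        ((mem_SBF hk hl _ _).2 (by omega))
    have hv : ∀ v, 1 ≤ v → (if v ∈ armSet T n a then 1 else 0) +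
        (if v ∈ legSet T n (l - 1) then 1 else 0) = (if v ∈ B then 1 else 0) +
        (if v ∈ C then 1 else 0) + (if n + 2 ≤ v ∧ v ≤ n + 1 + r then 1 else 0) := by
      intro v hv
      have := hcont v hv
      rw [contentOf_SBF hk hl hst hrow' hleg hv, hnu v hv] at this
      omega
    have hA1 : ∀ v ∈ armSet T n a, 1 ≤ v ∧ v ≤ n + 1 := by
      intro v hv
      simp only [armSet, Finset.mem_image, Finset.mem_range] at hv
      obtain ⟨c, hc, rfl⟩ := hv
      have hm : (n, c) ∈ SBF (hookFun a l) k n := (mem_SBF hk hl _ _).2 (by omega)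
      exact ⟨hS.1 _ hm, hle c hm⟩
    have hW1 : ∀ v ∈ legSet T n (l - 1), 1 ≤ v ∧ T (n, 0) < v := by
      intro v hv
      simp only [legSet, Finset.mem_image, Finset.mem_range] at hv
      obtain ⟨j, hj, rfl⟩ := hv
      have hm : (n + 1 + j, 0) ∈ SBF (hookFun a l) k n := (mem_SBF hk hl _ _).2 (by omega)
      exact ⟨hS.1 _ hm, hS.2.2.2 _ _ _ (by omega) ((mem_SBF hk hl _ _).2 (by omega)) hm⟩
    have hAB : armSet T n a ⊆ B := by
      intro v hvA
      have h1 := hA1 v hvA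
      have h2 := hv v h1.1
      rw [if_pos hvA, if_neg (by omega : ¬ (n + 2 ≤ v ∧ v ≤ n + 1 + r))] at h2
      by_contra hvB
      rw [if_neg hvB, if_neg (fun h => hvB (hCB h))] at h2
      omega
    have hCA : C ⊆ armSet T n a := by
      intro v hvC
      have h3 := hC v hvC
      have h2 := hv v (by omega)
      rw [if_pos hvC, if_pos (hCB hvC)] at h2
      by_contra hvA
      rw [if_neg hvA] at h2
      split_ifs at h2 <;> omega
    have hbA : b ∈ armSet T n a := by
      have h1 := hB b hbB
      have h2 := hv b (by omega)
      rw [if_pos hbB] at h2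
      by_contra hbA
      have hbW : b ∈ legSet T n (l - 1) := by
        by_contra hbW
        rw [if_neg hbA, if_neg hbW] at h2
        omega
      have h3 := (hW1 b hbW).2
      have h4 := hbmin (T (n, 0)) (hAB (Finset.mem_image_of_mem _ (Finset.mem_range.2 (by omega))))
      omega
    refine ⟨(hG _).2 ⟨hAB, hCA, hbA, ?_⟩, ?_⟩
    · unfold armSet
      rw [Finset.card_image_of_injOn, Finset.card_range]
      intro x hx y hy hxy
      simp only [Finset.coe_range, Set.mem_Iio] at hx hy
      dsimp only at hxy
      rcases lt_trichotomy x y with h | h | h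
      · have := hrow' _ _ h hy; omega
      · exact h
      · have := hrow' _ _ h hx; omega
    · ext v
      simp only [complLeg, Finset.mem_union, Finset.mem_sdiff, Finset.mem_Icc]
      by_cases h0 : 1 ≤ v
      · have h2 := hv v h0
        have h3 := @hAB v
        have h4 := @hCA v
        have h5 : v ∈ B → ¬ (n + 2 ≤ v ∧ v ≤ n + 1 + r) := fun h => by have := hB v h; omega
        rw [indicator_sum_iff h3 h4 h5] at h2
        tauto
      · have h3 := hB v
        have h4 := @hCB v
        have h5 := hW1 v
        have h6 := hC v
        constructor
        · intro h; exact absurd (h5 h).1 h0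
        · rintro ((h | h) | h)
          · have := h3 h.1; omega
          · have := h6 h; omega
          · omega
  -- conversely every `A ∈ G` is the arm of such a tableau
  have backward : ∀ A ∈ G, IsSSYT (SBF (hookFun a l) k n) (mkT n k a l A (complLeg n r B C A)) ∧
      IsLattice (SBF (hookFun a l) k n) (mkT n k a l A (complLeg n r B C A)) ∧
      ∀ v, 1 ≤ v → contentOf (SBF (hookFun a l) k n) (mkT n k a l A (complLeg n r B C A)) v =
        nuBC n (a + l - 1) B C v := by
    intro A hA
    obtain ⟨hAB, hCA, hbA, hcA⟩ := (hG A).1 hA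
    have hcW : (complLeg n r B C A).card = l - 1 := by
      have := card_complLeg (r := r) (fun b hb => (hB b hb).2) hCA hAB
      omega
    have hmemW : ∀ v, v ∈ complLeg n r B C A ↔
        (v ∈ B ∧ v ∉ A) ∨ v ∈ C ∨ (n + 2 ≤ v ∧ v ≤ n + 1 + r) := by
      intro v
      simp only [complLeg, Finset.mem_union, Finset.mem_sdiff, Finset.mem_Icc]
      tauto
    have hWb : ∀ v ∈ complLeg n r B C A, b < v := by
      intro v hv
      have hne : v ≠ b := by
        rintro rfl
        have := (hB v hbB).2
        rcases (hmemW v).1 hv with h | h | h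
        · exact h.2 hbA
        · exact hbC h
        · omega
      have : b ≤ v := by
        rcases (hmemW v).1 hv with h | h | h
        · exact hbmin v h.1
        · exact hbmin v (hCB h)
        · have := (hB b hbB).2; omega
      omega
    generalize hW : complLeg n r B C A = W at *
    have hst : StairForm (mkT n k a l A W) n k n := mkT_stair A W
    have harm : ∀ c, c < a → mkT n k a l A W (n, c) = Nat.nth (· ∈ A) c := fun c => mkT_arm A W
    have hlg : ∀ j, j < l - 1 → mkT n k a l A W (n + 1 + j, 0) = Nat.nth (· ∈ W) j :=
      fun c => mkT_leg A W
    have hrow : ∀ c c', c < c' → c' < a → mkT n k a l A W (n, c) < mkT n k a l A W (n, c') := by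
      intro c c' h h'
      rw [harm c (by omega), harm c' h']
      exact nth_strict A c c' h (by omega)
    have hleg : ∀ j j', j < j' → j' < l - 1 →
        mkT n k a l A W (n + 1 + j, 0) < mkT n k a l A W (n + 1 + j', 0) := by
      intro c c' h h'
      rw [hlg c (by omega), hlg c' h']
      exact nth_strict W c c' h (by omega)
    have hAset : armSet (mkT n k a l A W) n a = A := armSet_mkT A W hcA
    have hWset : legSet (mkT n k a l A W) n (l - 1) = W := legSet_mkT A W hcW
    have harmA : ∀ c, c < a → mkT n k a l A W (n, c) ∈ A := by
      intro c hc
      rw [harm c hc]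
      exact nth_mem_finset A (by omega)
    have hlegW : ∀ j, j < l - 1 → mkT n k a l A W (n + 1 + j, 0) ∈ W := by
      intro c hc
      rw [hlg c hc]
      exact nth_mem_finset W (by omega)
    have hlow : ∀ c, c < a → c + 2 - k ≤ mkT n k a l A W (n, c) := by
      intro c
      induction c with
      | zero => intro h; have := hB _ (hAB (harmA 0 h)); omega
      | succ c ih =>
        intro h
        have := ih (by omega)
        have := hrow c (c + 1) (by omega) h
        omega
    -- the corner is the smallest element of `B`
    have hcorner : mkT n k a l A W (n, 0) ≤ b := by
      obtain ⟨c, hc, hcb⟩ := exists_nth_eq A hbA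
      rw [← harm c (by omega)] at hcb
      rcases Nat.eq_zero_or_pos c with rfl | h
      · exact hcb.le
      · have := hrow 0 c h (by omega); omega
    have hb2 := hB b hbB
    refine ⟨⟨?_, ?_, ?_, ?_⟩, ?_, ?_⟩
    · rintro ⟨i, c⟩ hm
      rcases (mem_SBF hk hl i c).1 hm with ⟨h1, h2, h3⟩ | ⟨rfl, h2⟩ | ⟨h1, h2, rfl⟩
      · rw [hst i c h1 h2 h3]; omega
      · have := hlow c h2; omega
      · obtain ⟨j, rfl⟩ := Nat.exists_eq_add_of_lt h1
        rw [show n + j + 1 = n + 1 + j by omega]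
        have := hWb _ (hlegW j (by omega))
        omega
    · rintro ⟨i, c⟩ hm
      rw [mem_SBF hk hl] at hm
      simp only [mkT]
      split_ifs <;> omega
    · intro i c c' hcc hm hm'
      rcases hcc.eq_or_lt with rfl | hcc
      · exact le_rfl
      rw [mem_SBF hk hl] at hm hm'
      rcases hm with ⟨h1, h2, h3⟩ | ⟨rfl, h2⟩ | ⟨h1, h2, rfl⟩
      · rw [hst i c h1 h2 h3, hst i c' h1 (by omega) (by omega)]; omega
      · exact (hrow c c' hcc (by omega)).le
      · omega
    · intro i i' c hii hm hm'
      rw [mem_SBF hk hl] at hm hm'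
      rcases hm' with ⟨h1, h2, h3⟩ | ⟨rfl, h2⟩ | ⟨h1, h2, rfl⟩
      · rw [hst i c (by omega) (by omega) (by omega), hst i' c h1 h2 h3]; omega
      · rw [hst i c (by omega) (by omega) (by omega)]
        have := hlow c h2
        omega
      · obtain ⟨j, rfl⟩ := Nat.exists_eq_add_of_lt h1
        rw [show n + j + 1 = n + 1 + j by omega] at *
        have hw := hWb _ (hlegW j (by omega))
        rcases hm with ⟨h1, h2, h3⟩ | ⟨rfl, h2⟩ | ⟨h1, h2, -⟩
        · rw [hst i 0 h1 h2 h3]; omega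
        · omega
        · obtain ⟨j', rfl⟩ := Nat.exists_eq_add_of_lt h1
          rw [show n + j' + 1 = n + 1 + j' by omega] at *
          exact hleg j' j (by omega) (by omega)
    · rintro ⟨i, c⟩ hm v hv
      by_cases hin : i ≤ n
      · rw [readUpTo_count hD, readUpTo_count hD]
        dsimp only
        rw [rowsAbove_stair hk hl le_rfl hst hin hv,
          rowsAbove_stair hk hl le_rfl hst hin (by omega)]
        have hstrict : ∀ c c', c < c' → (i, c) ∈ SBF (hookFun a l) k n →
            (i, c') ∈ SBF (hookFun a l) k n →
            mkT n k a l A W (i, c) < mkT n k a l A W (i, c') := by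
          intro c c' hcc hm hm'
          rw [mem_SBF hk hl] at hm hm'
          rcases hm with ⟨h1, h2, h3⟩ | ⟨rfl, h2⟩ | ⟨h1, h2, rfl⟩
          · rw [hst i c h1 h2 h3, hst i c' h1 (by omega) (by omega)]; omega
          · exact hrow c c' hcc (by omega)
          · omega
        have hone := rowFrom_le_one hD (j := c) (v := v + 1) hstrict
        by_cases hvi : v ≤ i
        · omega
        · have : rowFrom (SBF (hookFun a l) k n) (mkT n k a l A W) i c (v + 1) = 0 := by
            apply rowFrom_eq_zero
            intro c' _ hm'
            rw [mem_SBF hk hl] at hm'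
            rcases hm' with ⟨h1, h2, h3⟩ | ⟨rfl, h2⟩ | ⟨h1, h2, rfl⟩
            · rw [hst i c' h1 h2 h3]; omega
            · have := hB _ (hAB (harmA c' h2)); omega
            · omega
          omega
      · rw [mem_SBF hk hl] at hm
        obtain ⟨j, rfl⟩ := Nat.exists_eq_add_of_lt (not_le.1 hin)
        have hc0 : c = 0 := by omega
        subst hc0
        rw [readUpTo_count hD, readUpTo_count hD]
        dsimp only
        rw [← rowsAbove_succ hD, ← rowsAbove_succ hD,
          show n + j + 1 + 1 = n + 1 + (j + 1) by omega,
          rowsAbove_leg hk hl hst hrow hleg hv (by omega),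
          rowsAbove_leg hk hl hst hrow hleg (by omega) (by omega), hAset]
        have hpre : ∀ x, x ∈ legSet (mkT n k a l A W) n (j + 1) ↔
            x ∈ W ∧ x ≤ mkT n k a l A W (n + 1 + j, 0) := by
          intro x
          have hxW : x ∈ W ↔ x ∈ legSet (mkT n k a l A W) n (l - 1) := by rw [hWset]
          rw [hxW]
          simp only [legSet, Finset.mem_image, Finset.mem_range]
          constructor
          · rintro ⟨m, hm', rfl⟩
            refine ⟨⟨m, by omega, rfl⟩, ?_⟩
            rcases (Nat.lt_succ_iff_lt_or_eq.1 hm') with h | rfl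
            · exact (hleg m j h (by omega)).le
            · exact le_rfl
          · rintro ⟨⟨m, hm', rfl⟩, hx⟩
            refine ⟨m, ?_, rfl⟩
            by_contra! h
            have := hleg j m (by omega) hm'
            omega
        simp only [hpre]
        generalize mkT n k a l A W (n + 1 + j, 0) = g
        have hA' : v + 1 ∈ A → v ≤ n := fun h => by have := hB _ (hAB h); omega
        by_cases hx : v + 1 ∈ W ∧ v + 1 ≤ g
        · have hvW : v ∈ B → v ∈ A ∨ (v ∈ W ∧ v ≤ g) := by
            intro h
            by_cases hvA : v ∈ A
            · exact Or.inl hvA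
            · exact Or.inr ⟨(hmemW v).2 (Or.inl ⟨h, hvA⟩), by omega⟩
          -- an entry `v + 1` of `W` is preceded by a `v` outside `δ_n`, if one is needed
          have hkey : (v + 1 ∈ A ∨ n < v) → v ∈ A ∨ (v ∈ W ∧ v ≤ g) := by
            intro h
            rcases (hmemW _).1 hx.1 with h1 | h1 | h1
            · have := hB _ h1.1
              rcases h with h | h
              · exact absurd h h1.2
              · omega
            · exact hvW (hmin _ h1)
            · rcases Nat.eq_or_lt_of_le h1.1 with h2 | h2
              · have : v = n + 1 := by omega
                exact hvW (this ▸ hBn)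
              · exact Or.inr ⟨(hmemW v).2 (Or.inr (Or.inr (by omega))), by omega⟩
          have hsum : (v + 1 ∈ A ∨ n < v) → 1 ≤ (if v ∈ A then 1 else 0) +
              (if v ∈ W ∧ v ≤ g then 1 else 0) := by
            intro h
            rcases hkey h with h | h
            · rw [if_pos h]; omega
            · rw [if_pos h]; omega
          rw [if_pos hx]
          by_cases hvA : v + 1 ∈ A
          · have := hsum (Or.inl hvA)
            have := hA' hvA
            rw [if_pos hvA]
            omega
          · rw [if_neg hvA]
            by_cases hvn : n < v
            · have := hsum (Or.inr hvn)
              omega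
            · omega
        · rw [if_neg hx]
          by_cases hvA : v + 1 ∈ A
          · have := hA' hvA
            rw [if_pos hvA]
            omega
          · rw [if_neg hvA]
            omega
    · intro v hv
      rw [contentOf_SBF hk hl hst hrow hleg hv, hnu v hv, hAset, hWset]
      have h5 : v ∈ B → ¬ (n + 2 ≤ v ∧ v ≤ n + 1 + r) := fun h => by have := hB v h; omega
      have := (indicator_sum_iff (@hAB v) (@hCA v) h5).2 (hmemW v)
      omega
  refine Set.ncard_congr (fun T _ => armSet T n a) ?_ ?_ ?_
  · rintro T ⟨hS, hL, hc⟩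
    exact (forward T hS hL hc).1
  · rintro T T' ⟨hS, hL, hc⟩ ⟨hS', hL', hc'⟩ heq
    rw [eq_mkT hk hl ha hS hL, eq_mkT hk hl ha hS' hL', (forward T hS hL hc).2,
      (forward T' hS' hL' hc').2, heq]
  · intro A hA
    exact ⟨_, backward A hA, armSet_mkT A _ ((hG A).1 hA).2.2.2⟩

/-- Let `n ≥ 1`, `0 ≤ k ≤ 1`, and let `λ = (λa, 1^{λl-1})`
be a hook with `λl ≤ λa ≤ k + n`.  Let `B`, `C` be sets with
`n+1 ∈ B ⊆ {2-k,…,n+1}`, `C ⊆ {3-k,…,n+1}`, `C ⊊ B`, `|B|+|C| ≤ |λ|-1`,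
`|B| ≥ λa`, `|C|+1 ≤ λl`, and such that for each maximal interval of
consecutive integers of `C` with minimum `c` one has `c - 1 ∈ B∖C`
(equivalently, `c - 1 ∈ B∖C` for every `c ∈ C` with `c - 1 ∉ C`).  Set
`ν = ν(B,C) = δ_n + Σ_{b∈B} e_b + Σ_{c∈C} e_c + (0^{n+1}, 1^{|λ|-|B|-|C|})`.
Then the number of SSYT of shape `𝒮(λᵗ,k,n)` with lattice reading word and
content `ν` is `C(|B|-|C|-1, λl-|C|-1)`, and the number of SSYT of shape
`𝒮(λ,k,n)` with lattice reading word and content `ν` is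
`C(|B|-|C|-1, λa-|C|-1)`. -/
theorem hook_transpose_LRcounts
    (n k la ll : ℕ) (hn : 1 ≤ n) (hk : k ≤ 1) (hll : 1 ≤ ll) (hlla : ll ≤ la)
    (hla : la ≤ k + n) (B C : Finset ℕ)
    (hB : ↑B ⊆ Set.Icc (2 - k) (n + 1)) (hBn : n + 1 ∈ B)
    (hC : ↑C ⊆ Set.Icc (3 - k) (n + 1)) (hCB : C ⊂ B)
    (hcard : B.card + C.card + 2 ≤ la + ll)
    (hBa : la ≤ B.card) (hCl : C.card + 1 ≤ ll)
    (hmin : ∀ c ∈ C, c - 1 ∉ C → c - 1 ∈ B \ C) :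
    LRcount (SBF (hookFun ll la) k n) (nuBC n (la + ll - 1) B C) =
      (B.card - C.card - 1).choose (ll - C.card - 1) ∧
    LRcount (SBF (hookFun la ll) k n) (nuBC n (la + ll - 1) B C) =
      (B.card - C.card - 1).choose (la - C.card - 1) := by
  have hB' : ∀ b ∈ B, 2 - k ≤ b ∧ b ≤ n + 1 := fun b hb => hB hb
  have hC' : ∀ c ∈ C, 3 - k ≤ c := fun c hc => (hC hc).1
  have hmin' : ∀ c ∈ C, c - 1 ∈ B := by
    intro c hc
    by_cases h : c - 1 ∈ C
    · exact hCB.1 h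
    · exact (Finset.mem_sdiff.1 (hmin c hc h)).1
  constructor
  · rw [add_comm la ll]
    exact LRcount_hook n k ll la hn hk (by omega) (by omega) B C hB' hBn hC' hCB.1 (by omega) hCl
      hmin'
  · exact LRcount_hook n k la ll hn hk hll (by omega) B C hB' hBn hC' hCB.1 hcard (by omega) hmin'
end

section
/- Let k ≥ 0 and let λ be a partition such that both S(λ,k,1) and S(λ^t,k,1) are defined and are connected skew diagrams. Then the skew Schur functions s_{S(λ^t,k,1)} and s_{S(λ,k,1)} become equal upon restricting to 2 variables, i.e. after setting x_3 = x_4 = ⋯ = 0. (Indeed, whenever λ ≠ λ^t both restricted skew Schur functions are zero.) -/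
/-- The cells of the skew diagram `λ/δ_{k-1}` (in its own coordinates). -/
def skewCells (lam : ℕ → ℕ) (k : ℕ) : Set (ℕ × ℕ) :=
  {p | k - 1 - p.1 ≤ p.2 ∧ p.2 < lam p.1}

/-- Two cells are adjacent if one is obtained from the other by a single step
up, down, left or right. -/
def AdjCells (p q : ℕ × ℕ) : Prop :=
  (p.1 = q.1 ∧ (p.2 + 1 = q.2 ∨ q.2 + 1 = p.2)) ∨
  (p.2 = q.2 ∧ (p.1 + 1 = q.1 ∨ q.1 + 1 = p.1))

/-- A diagram is connected if any two of its cells are joined by a path of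
adjacent cells staying inside the diagram. -/
def IsConnectedDiagram (D : Set (ℕ × ℕ)) : Prop :=
  ∀ p ∈ D, ∀ q ∈ D, Relation.ReflTransGen (fun a b => AdjCells a b ∧ a ∈ D ∧ b ∈ D) p q

/-- The transpose (conjugate) partition: `λᵗ_{j+1}` is the number of rows of
`λ` of length greater than `j`. -/
noncomputable def transposeFun (lam : ℕ → ℕ) : ℕ → ℕ := fun j => ({i | j < lam i}).ncard

/-- The defining property of the conjugate partition: cell `(i, j)` lies in `λ` iff `(j, i)` lies
in `λᵗ`. -/
lemma lt_transposeFun_iff {lam : ℕ → ℕ} (h : IsPartition lam) (i j : ℕ) :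
    i < transposeFun lam j ↔ j < lam i := by
  obtain ⟨hanti, N, hN⟩ := h
  have hex : ∃ m, lam m ≤ j := ⟨N, by rw [hN N le_rfl]; exact Nat.zero_le _⟩
  have hset : {i | j < lam i} = (Finset.range (Nat.find hex) : Set ℕ) := by
    ext m
    simp only [Set.mem_ofPred_eq, Finset.coe_range, Set.mem_Iio, Nat.lt_find_iff, not_le]
    exact ⟨fun hm m' hm' => hm.trans_le (hanti _ _ hm'), fun hm => hm m le_rfl⟩
  have hval : transposeFun lam j = Nat.find hex := by
    rw [transposeFun, hset, Set.ncard_coe_finset, Finset.card_range]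
  rw [hval, Nat.lt_find_iff]
  exact ⟨fun hm => not_le.1 (hm i le_rfl), fun hm m' hm' => not_le.2 (hm.trans_le (hanti _ _ hm'))⟩

lemma isPartition_transposeFun {lam : ℕ → ℕ} (h : IsPartition lam) :
    IsPartition (transposeFun lam) := by
  refine ⟨fun i j hij => ?_, lam 0, fun i hi => ?_⟩
  · refine le_of_forall_lt fun c hc => ?_
    rw [lt_transposeFun_iff h] at hc ⊢
    omega
  · by_contra hne
    have := (lt_transposeFun_iff h 0 i).1 (Nat.pos_of_ne_zero hne)
    omega

lemma SBF_finite_s16 {mu : ℕ → ℕ} (h : IsPartition mu) (k n : ℕ) : (SBF mu k n).Finite := by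
  obtain ⟨hanti, N, hN⟩ := h
  refine (((Set.finite_Iio (n + N)).prod (Set.finite_Iio (n + k + mu 0)))).subset ?_
  rintro ⟨a, b⟩ (⟨h1, -, h3⟩ | ⟨h1, -, h3⟩)
  · simp only [Set.mem_prod, Set.mem_Iio] at *
    omega
  · simp only [Set.mem_prod, Set.mem_Iio] at *
    have hb := hanti 0 (a - n) (Nat.zero_le _)
    have ha : ¬ N ≤ a - n := fun hle => by
      rw [hN _ hle] at h3
      omega
    omega

/-- A path in `μ/δ_{k-1}` from the top row to the bottom row must step from row `i` to row
`i + 1` within a common column, which bounds `μ` from below. -/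
lemma le_of_connected {mu : ℕ → ℕ} {k : ℕ} (h0 : k < mu 0) (hk : 0 < mu k)
    (hconn : IsConnectedDiagram (skewCells mu k)) (i : ℕ) (hi : i < k) :
    k - i ≤ mu (i + 1) := by
  by_contra hlt
  have hp : ((0, k) : ℕ × ℕ) ∈ skewCells mu k := ⟨by simp, h0⟩
  have hq : ((k, 0) : ℕ × ℕ) ∈ skewCells mu k := ⟨by simp, hk⟩
  have key : ∀ q, Relation.ReflTransGen
      (fun a b => AdjCells a b ∧ a ∈ skewCells mu k ∧ b ∈ skewCells mu k) (0, k) q →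
      q.1 ≤ i := by
    intro q hpath
    induction hpath with
    | refl => exact Nat.zero_le _
    | @tail b c _ hstep ih =>
      obtain ⟨hadj, ⟨hb, -⟩, ⟨-, hc⟩⟩ := hstep
      by_contra hci
      have hc1 : c.1 = i + 1 := by rcases hadj with h | h <;> omega
      rw [hc1] at hc
      rcases hadj with h | h <;> omega
  have := key _ (hconn _ hp _ hq)
  simp only at this
  omega

/-- Three cells in one column cannot be filled with entries from `{1,2}`. -/
lemma no_three_in_column {D : Set (ℕ × ℕ)} {T : ℕ × ℕ → ℕ} (hT : IsSSYT D T)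
    (hle : ∀ p ∈ D, T p ≤ 2) {a j : ℕ} (h1 : (a, j) ∈ D) (h2 : (a + 1, j) ∈ D)
    (h3 : (a + 2, j) ∈ D) : False := by
  obtain ⟨hpos, -, -, hcol⟩ := hT
  have e1 := hpos _ h1
  have e2 := hcol _ _ _ (Nat.lt_succ_self a) h1 h2
  have e3 := hcol _ _ _ (Nat.lt_succ_self (a + 1)) h2 h3
  have e4 := hle _ h3
  simp only [Nat.succ_eq_add_one, add_assoc, Nat.reduceAdd] at e2 e3
  omega

/-- The only foundation carrying a tableau with entries in `{1,2}` is `δ_{k+1}/δ_{k-1}`. -/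
lemma eq_staircase_of_SSYT {mu : ℕ → ℕ} {k : ℕ} (hpart : IsPartition mu) (h0 : mu 0 = k + 1)
    (hk : 0 < mu k) (hk1 : mu (k + 1) = 0)
    (hconn : IsConnectedDiagram (skewCells mu k)) {T : ℕ × ℕ → ℕ}
    (hT : IsSSYT (SBF mu k 1) T) (hle : ∀ p ∈ SBF mu k 1, T p ≤ 2) (i : ℕ) :
    mu i = k + 1 - i := by
  have hanti := hpart.1
  have hmem : ∀ a j, k - 1 - a ≤ j → j < mu a → (a + 1, j) ∈ SBF mu k 1 := fun a j h1 h2 =>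
    Or.inr ⟨by simp, by simpa using h1, by simpa using h2⟩
  rcases i with _ | i
  · simpa using h0
  rcases Nat.lt_or_ge i k with hi | hi
  · refine le_antisymm ?_ (by have := le_of_connected (by omega) hk hconn i hi; omega)
    by_contra hgt
    rcases i with _ | i
    · -- The cell of `Δ_1` lies above the first two cells of column `k` of the foundation.
      exact no_three_in_column hT hle (a := 0) (j := k)
        (Or.inl ⟨by simp, by simp, by simp⟩) (hmem 0 k (by omega) (by omega))
        (hmem 1 k (by omega) (by simp at hgt; omega))
    · have e1 := hanti i (i + 1) (by omega)
      have e2 := hanti (i + 1) (i + 1 + 1) (by omega)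
      exact no_three_in_column hT hle (a := i + 1) (j := k - 1 - i)
        (hmem i _ (by omega) (by omega)) (hmem (i + 1) _ (by omega) (by omega))
        (hmem (i + 2) _ (by omega) (by show _ < mu (i + 1 + 1); omega))
  · have := hanti (k + 1) (i + 1) (by omega)
    omega

lemma SSYTcount_eq_zero {mu : ℕ → ℕ} {k : ℕ} (hpart : IsPartition mu) (h0 : mu 0 = k + 1)
    (hk : 0 < mu k) (hk1 : mu (k + 1) = 0)
    (hconn : IsConnectedDiagram (skewCells mu k)) (hne : ¬ ∀ i, mu i = k + 1 - i)
    (alpha : ℕ → ℕ) (halpha : ∀ v, 2 < v → alpha v = 0) :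
    SSYTcount (SBF mu k 1) alpha = 0 := by
  have hempty : {T : ℕ × ℕ → ℕ | IsSSYT (SBF mu k 1) T ∧
      ∀ v, 1 ≤ v → contentOf (SBF mu k 1) T v = alpha v} = ∅ := by
    refine Set.eq_empty_of_forall_notMem ?_
    rintro T ⟨hT, hc⟩
    refine hne (eq_staircase_of_SSYT hpart h0 hk hk1 hconn hT fun p hp => ?_)
    by_contra hgt
    have hz : contentOf (SBF mu k 1) T (T p) = 0 := by
      rw [hc _ (by omega), halpha _ (by omega)]
    -- Finiteness of the shape is needed, as `ncard` of an infinite set is zero.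
    have hfin : {q ∈ SBF mu k 1 | T q = T p}.Finite :=
      (SBF_finite_s16 hpart k 1).subset (Set.sep_subset _ _)
    have hem := (Set.ncard_eq_zero hfin).1 hz
    exact (Set.eq_empty_iff_forall_notMem.1 hem) p ⟨hp, rfl⟩
  rw [SSYTcount, hempty, Set.ncard_empty]

/-- Let `k ≥ 0` and let `λ` be a partition such that both
`𝒮(λ,k,1)` and `𝒮(λᵗ,k,1)` are defined (i.e. `λ` and `λᵗ` contain `δ_{k-1}`,
the skew diagrams `λ/δ_{k-1}` and `λᵗ/δ_{k-1}` are connected, and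
`k ≤ λ₁, λᵗ₁ ≤ 1 + k`) and are connected (i.e. `k < λ₁` and `k < λᵗ₁`).
Then `s_{𝒮(λᵗ,k,1)}` and `s_{𝒮(λ,k,1)}` are equal upon restricting to `2`
variables: all monomial coefficients indexed by contents supported on `{1,2}`
agree.  Indeed, whenever `λ ≠ λᵗ` both restricted skew Schur functions are
zero. -/
theorem transpose_eq_in_two_variables
    (k : ℕ) (lam : ℕ → ℕ) (hpart : IsPartition lam)
    (hdelta : ∀ i, i + 1 < k → k - 1 - i ≤ lam i)
    (hdeltat : ∀ i, i + 1 < k → k - 1 - i ≤ transposeFun lam i)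
    (hconn : IsConnectedDiagram (skewCells lam k))
    (hconnt : IsConnectedDiagram (skewCells (transposeFun lam) k))
    (hk : k ≤ lam 0) (hl : lam 0 ≤ 1 + k)
    (hkt : k ≤ transposeFun lam 0) (hlt : transposeFun lam 0 ≤ 1 + k)
    (hScon : k < lam 0) (hScont : k < transposeFun lam 0) :
    (∀ alpha : ℕ → ℕ, (∀ v, 2 < v → alpha v = 0) →
      SSYTcount (SBF (transposeFun lam) k 1) alpha =
      SSYTcount (SBF lam k 1) alpha) ∧
    (lam ≠ transposeFun lam →
      ∀ alpha : ℕ → ℕ, (∀ v, 2 < v → alpha v = 0) →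
        SSYTcount (SBF (transposeFun lam) k 1) alpha = 0 ∧
        SSYTcount (SBF lam k 1) alpha = 0) := by
  have hl0 : lam 0 = k + 1 := by omega
  have ht0 : transposeFun lam 0 = k + 1 := by omega
  have hpt := isPartition_transposeFun hpart
  have hlk : 0 < lam k := (lt_transposeFun_iff hpart k 0).1 hScont
  have hlk1 : lam (k + 1) = 0 := by
    have := lt_transposeFun_iff hpart (k + 1) 0
    omega
  have htk : 0 < transposeFun lam k := (lt_transposeFun_iff hpart 0 k).2 hScon
  have htk1 : transposeFun lam (k + 1) = 0 := by
    have := lt_transposeFun_iff hpart 0 (k + 1)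
    omega
  have hzero : lam ≠ transposeFun lam →
      ∀ alpha : ℕ → ℕ, (∀ v, 2 < v → alpha v = 0) →
        SSYTcount (SBF (transposeFun lam) k 1) alpha = 0 ∧
        SSYTcount (SBF lam k 1) alpha = 0 := by
    intro hne alpha halpha
    refine ⟨SSYTcount_eq_zero hpt ht0 htk htk1 hconnt (fun hst => hne ?_) alpha halpha,
      SSYTcount_eq_zero hpart hl0 hlk hlk1 hconn (fun hst => hne ?_) alpha halpha⟩
    · funext i
      refine eq_of_forall_lt_iff fun c => ?_
      rw [← lt_transposeFun_iff hpart, hst, hst]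
      omega
    · funext i
      refine eq_of_forall_lt_iff fun c => ?_
      rw [lt_transposeFun_iff hpart, hst, hst]
      omega
  refine ⟨fun alpha halpha => ?_, hzero⟩
  by_cases h : lam = transposeFun lam
  · rw [← h]
  · rw [(hzero h alpha halpha).1, (hzero h alpha halpha).2]
end
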